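/- Let V₀ be a 5-dimensional vector space over ℂ and let W ⊆ ⋀²V₀ be a 2-dimensional subspace containing no nonzero decomposable element. Then the linear map (⋀⁴V₀)^∨ → {symmetric bilinear forms on W} sending a linear functional φ to the symmetric bilinear form (α,β) ↦ φ(α∧β) on W is surjective; equivalently, every quadratic form on W is of the form α ↦ φ(α∧α) for some φ ∈ (⋀⁴V₀)^∨. -/

import Mathlib

open ExteriorAlgebra

/-!
Contraction with a functional is an antiderivation, so if a bivector `x` satisfies `x ∧ x = 0`, then
every vector `v` obtained by contracting `x` satisfies `v ∧ x = 0`. A vector `v ≠ 0` with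
`v ∧ x = 0` divides `x`, so a bivector whose square vanishes is decomposable.

Suppose `c ∧ d = 0` with `c, d ∈ W` nonzero. Being an alternating form on the dual space, which has
odd dimension, `c` is contracted to zero by some functional `φ ≠ 0`. Contracting `c ∧ d = 0` gives
`c ∧ (φ ⌟ d) = 0`, and since no nonzero vector divides `c`, also `φ ⌟ d = 0`. Hence `c ∧ c` and
`d ∧ d` both lie in the fourth exterior power of the hyperplane `ker φ`, which is a line. So
`d + t c` has square zero for a suitable scalar `t`, hence vanishes; then `d ∧ d = -t (d ∧ c) = 0`
and `d = 0`, a contradiction.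

Thus the wedge product has no zero divisors on `W`. As every binary quadratic form is a product of
two linear forms, every element of `Sym² W` is a product of two vectors, so the wedge product is
injective on `Sym² W`, and the dual map is surjective.
-/

open CliffordAlgebra (contractLeft contractLeft_ι contractLeft_ι_mul contractLeft_contractLeft)

theorem apply_smul_add_smul_of_symm {R W N : Type*} [CommRing R]
    [AddCommGroup W] [Module R W] [AddCommGroup N] [Module R N] {F : W →ₗ[R] W →ₗ[R] N}
    (hF : ∀ x y, F x y = F y x) (u v : W) (p q r s : R) :
    F (p • u + q • v) (r • u + s • v) =
      Fintype.linearCombination R ![F u u, F u v, F v v] ![p * r, p * s + q * r, q * s] := by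
  simp only [map_add, map_smul, LinearMap.add_apply, LinearMap.smul_apply, hF v u,
    Fintype.linearCombination_apply, Fin.sum_univ_three, Matrix.cons_val]
  module

section Bilinear

variable {K U W N : Type*} [Field K]
  [AddCommGroup U] [Module K U] [AddCommGroup W] [Module K W] [AddCommGroup N] [Module K N]

theorem exists_ne_zero_apply_eq_zero_of_isAlt_of_odd_finrank [NeZero (2 : K)]
    {ω : LinearMap.BilinForm K U} (hω : ω.IsAlt) (hodd : Odd (Module.finrank K U)) :
    ∃ u ≠ 0, ω u = 0 := by
  have : FiniteDimensional K U := Module.finite_of_finrank_pos hodd.pos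
  let b := Module.finBasis K U
  let A := LinearMap.BilinForm.toMatrix b ω
  have hskew : A.transpose = -A := by
    ext i j
    simp [A, LinearMap.BilinForm.toMatrix_apply, hω.neg_eq]
  have hdet : A.det = 0 := by
    have h : A.det = -A.det := by
      simpa [Matrix.det_neg, hodd.neg_one_pow] using congrArg Matrix.det hskew
    have h2 : 2 * A.det = 0 := by linear_combination h
    exact (mul_eq_zero.mp h2).resolve_left two_ne_zero
  have hker : LinearMap.ker ω ≠ ⊥ := fun h =>
    (LinearMap.BilinForm.nondegenerate_iff_det_ne_zero b).mp
      (LinearMap.BilinForm.nondegenerate_iff_ker_eq_bot.mpr h) hdet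
  obtain ⟨u, hu, hu0⟩ := Submodule.exists_mem_ne_zero_of_ne_bot hker
  exact ⟨u, hu0, hu⟩

theorem exists_binary_quadratic_eq_mul [NeZero (2 : K)] (hK : ∀ a : K, IsSquare a)
    (c : Fin 3 → K) : ∃ p q r s : K, c = ![p * r, p * s + q * r, q * s] := by
  by_cases hc : c 0 = 0
  · refine ⟨0, 1, c 1, c 2, ?_⟩
    ext i
    fin_cases i <;> simp [hc]
  · obtain ⟨x, hx⟩ := exists_quadratic_eq_zero hc (hK (discrim (c 0) (c 1) (c 2)))
    refine ⟨1, -x, c 0, c 1 + c 0 * x, ?_⟩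
    have hlast : c 2 = -x * (c 1 + c 0 * x) := by linear_combination hx
    ext i
    fin_cases i <;> simp [hlast, mul_comm x]

theorem exists_span_range_eq_top_of_finrank_le [FiniteDimensional K W] {n : ℕ}
    (h : Module.finrank K W ≤ n) : ∃ w : Fin n → W, Submodule.span K (Set.range w) = ⊤ := by
  obtain ⟨f, hf⟩ := (finrank_le_iff_exists_linearMap (R := K) (M := W) (M' := Fin n → K)).mp
    (by simpa using h)
  obtain ⟨g, hg⟩ := f.exists_leftInverse_of_injective (LinearMap.ker_eq_bot.mpr hf)
  have hg_surj : Function.Surjective g := fun w => ⟨f w, LinearMap.congr_fun hg w⟩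
  refine ⟨g ∘ Pi.basisFun K (Fin n), ?_⟩
  rw [Set.range_comp, ← Submodule.map_span, Module.Basis.span_eq, Submodule.map_top,
    LinearMap.range_eq_top.mpr hg_surj]

theorem exists_dual_comp_eq_of_finrank_le_two [NeZero (2 : K)] (hK : ∀ a : K, IsSquare a)
    [FiniteDimensional K W] (hW : Module.finrank K W ≤ 2) {F : W →ₗ[K] W →ₗ[K] N}
    (hF : ∀ x y, F x y = F y x) (hF0 : ∀ x y, F x y = 0 → x = 0 ∨ y = 0)
    {B : W →ₗ[K] W →ₗ[K] K} (hB : ∀ x y, B x y = B y x) :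
    ∃ φ : N →ₗ[K] K, ∀ x y, B x y = φ (F x y) := by
  obtain ⟨w, hw⟩ := exists_span_range_eq_top_of_finrank_le hW
  let T := Fintype.linearCombination K ![F (w 0) (w 0), F (w 0) (w 1), F (w 1) (w 1)]
  let S := Fintype.linearCombination K ![B (w 0) (w 0), B (w 0) (w 1), B (w 1) (w 1)]
  have hS : S ∈ (LinearMap.ker T).dualAnnihilator := by
    rw [Submodule.mem_dualAnnihilator]
    intro c hc
    obtain ⟨p, q, r, s, rfl⟩ := exists_binary_quadratic_eq_mul hK c
    rw [LinearMap.mem_ker, ← apply_smul_add_smul_of_symm hF] at hc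
    rw [← apply_smul_add_smul_of_symm hB]
    rcases hF0 _ _ hc with h | h <;> rw [h] <;> simp only [map_zero, LinearMap.zero_apply]
  obtain ⟨φ, hφ⟩ : S ∈ LinearMap.range T.dualMap := by
    rwa [LinearMap.range_dualMap_eq_dualAnnihilator_ker]
  have hspan (x : W) : ∃ p q : K, p • w 0 + q • w 1 = x := by
    have hx : x ∈ Submodule.span K (Set.range w) := hw ▸ Submodule.mem_top
    obtain ⟨c, hc⟩ := (Submodule.mem_span_range_iff_exists_fun K).mp hx
    exact ⟨c 0, c 1, by rw [← hc, Fin.sum_univ_two]⟩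
  refine ⟨φ, fun x y => ?_⟩
  obtain ⟨p, q, rfl⟩ := hspan x
  obtain ⟨r, s, rfl⟩ := hspan y
  rw [apply_smul_add_smul_of_symm hF, apply_smul_add_smul_of_symm hB]
  exact (LinearMap.congr_fun hφ _).symm

end Bilinear

section Bivectors

variable {R M : Type*} [CommRing R] [AddCommGroup M] [Module R M]

/-- A decomposable bivector, i.e. a product of two vectors; `0` counts as decomposable. -/
def IsDecomposable (x : ExteriorAlgebra R M) : Prop :=
  ∃ u v : M, x = ι R u * ι R v

@[elab_as_elim]
theorem exteriorPower_two_induction {P : ∀ x : ExteriorAlgebra R M, x ∈ ⋀[R]^2 M → Prop}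
    (ι_mul_ι : ∀ u v h, P (ι R u * ι R v) h)
    (add : ∀ x y hx hy, P x hx → P y hy → P (x + y) (Submodule.add_mem _ hx hy))
    {x : ExteriorAlgebra R M} (hx : x ∈ ⋀[R]^2 M) : P x hx := by
  suffices h : ∃ hx' : x ∈ ⋀[R]^2 M, P x hx' from h.elim fun _ h => h
  have hx' : x ∈ LinearMap.range (ι R : M →ₗ[R] _) * LinearMap.range (ι R) := by
    rwa [← pow_two]
  refine Submodule.mul_induction_on hx' ?_
    fun y z ⟨hy, hPy⟩ ⟨hz, hPz⟩ => ⟨_, add y z hy hz hPy hPz⟩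
  rintro _ ⟨u, rfl⟩ _ ⟨v, rfl⟩
  have huv : ι R u * ι R v ∈ ⋀[R]^2 M := by
    rw [exteriorPower, pow_two]
    exact Submodule.mul_mem_mul ⟨u, rfl⟩ ⟨v, rfl⟩
  exact ⟨huv, ι_mul_ι u v huv⟩

theorem ι_mul_ι_swap (u v : M) : ι R u * ι R v = -(ι R v * ι R u) :=
  eq_neg_of_add_eq_zero_left (ι_add_mul_swap u v)

theorem commute_of_mem_exteriorPower_two {x : ExteriorAlgebra R M} (hx : x ∈ ⋀[R]^2 M)
    (y : ExteriorAlgebra R M) : Commute x y := by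
  induction hx using exteriorPower_two_induction with
  | add x x' _ _ h h' => exact h.add_left h'
  | ι_mul_ι u v _ =>
    induction y using ExteriorAlgebra.induction with
    | algebraMap r => exact Algebra.commute_algebraMap_right r _
    | mul y z hy hz => exact hy.mul_right hz
    | add y z hy hz => exact hy.add_right hz
    | ι w =>
      calc ι R u * ι R v * ι R w = -(ι R u * ι R w * ι R v) := by
            rw [mul_assoc, ι_mul_ι_swap v w, mul_neg, mul_assoc]
        _ = ι R w * (ι R u * ι R v) := by rw [ι_mul_ι_swap u w, neg_mul, neg_neg, mul_assoc]

theorem contractLeft_ι_mul_ι (φ : Module.Dual R M) (u v : M) :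
    contractLeft φ (ι R u * ι R v) = ι R (φ u • v - φ v • u) := by
  rw [contractLeft_ι_mul, contractLeft_ι, map_sub, map_smul, map_smul, ← Algebra.commutes,
    Algebra.smul_def (φ v)]

theorem exists_contractLeft_eq_ι (φ : Module.Dual R M) {x : ExteriorAlgebra R M}
    (hx : x ∈ ⋀[R]^2 M) : ∃ v, contractLeft φ x = ι R v := by
  induction hx using exteriorPower_two_induction with
  | ι_mul_ι u v _ => exact ⟨_, contractLeft_ι_mul_ι φ u v⟩
  | add x y _ _ hx hy =>
    obtain ⟨u, hu⟩ := hx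
    obtain ⟨v, hv⟩ := hy
    exact ⟨u + v, by rw [map_add, map_add, hu, hv]⟩

theorem contractLeft_mul_of_mem_exteriorPower_two (φ : Module.Dual R M)
    {x : ExteriorAlgebra R M} (hx : x ∈ ⋀[R]^2 M) (y : ExteriorAlgebra R M) :
    contractLeft φ (x * y) = contractLeft φ x * y + x * contractLeft φ y := by
  induction hx using exteriorPower_two_induction with
  | ι_mul_ι u v _ =>
    rw [contractLeft_ι_mul_ι, mul_assoc, contractLeft_ι_mul, contractLeft_ι_mul, map_sub, map_smul,
      map_smul, sub_mul, smul_mul_assoc, smul_mul_assoc, mul_sub, mul_smul_comm, mul_assoc]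
    abel
  | add x x' _ _ h h' =>
    rw [add_mul, map_add, h, h', map_add]
    noncomm_ring

theorem sum_ι_mul_contractLeft_coord {n : Type*} [Fintype n] (b : Module.Basis n R M)
    {x : ExteriorAlgebra R M} (hx : x ∈ ⋀[R]^2 M) :
    ∑ i, ι R (b i) * contractLeft (b.coord i) x = (2 : R) • x := by
  induction hx using exteriorPower_two_induction with
  | add x y _ _ hx hy => simp only [map_add, mul_add, Finset.sum_add_distrib, hx, hy, smul_add]
  | ι_mul_ι u v _ =>
    have hsum (w : M) : ∑ i, b.coord i w • ι R (b i) = ι R w := by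
      simp only [← map_smul, ← map_sum, b.coord_apply, b.sum_repr]
    simp only [contractLeft_ι_mul_ι, map_sub, map_smul, mul_sub, mul_smul_comm,
      ← smul_mul_assoc, Finset.sum_sub_distrib, ← Finset.sum_mul, hsum]
    rw [ι_mul_ι_swap v u, sub_neg_eq_add, smul_mul_assoc, two_smul]

end Bivectors

section Field

variable {K V : Type*} [Field K] [AddCommGroup V] [Module K V]

theorem isDecomposable_of_ι_mul_eq_zero {v : V} (hv : v ≠ 0) {x : ExteriorAlgebra K V}
    (hx : x ∈ ⋀[K]^2 V) (h : ι K v * x = 0) : IsDecomposable x := by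
  obtain ⟨φ, hφ⟩ := Module.Projective.exists_dual_eq_one K hv
  obtain ⟨u, hu⟩ := exists_contractLeft_eq_ι φ hx
  have hdiv : contractLeft φ (ι K v * x) = x - ι K v * ι K u := by
    rw [contractLeft_ι_mul, hφ, one_smul, hu]
  rw [h, map_zero] at hdiv
  exact ⟨v, u, sub_eq_zero.mp hdiv.symm⟩

theorem eq_zero_of_forall_contractLeft_eq_zero [NeZero (2 : K)] [FiniteDimensional K V]
    {x : ExteriorAlgebra K V} (hx : x ∈ ⋀[K]^2 V)
    (h : ∀ φ : Module.Dual K V, contractLeft φ x = 0) : x = 0 := by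
  have h2 : (2 : K) • x = 0 := by
    simp only [← sum_ι_mul_contractLeft_coord (Module.finBasis K V) hx, h, mul_zero,
      Finset.sum_const_zero]
  exact (smul_eq_zero.mp h2).resolve_left two_ne_zero

theorem isDecomposable_of_mul_self_eq_zero [NeZero (2 : K)] [FiniteDimensional K V]
    {x : ExteriorAlgebra K V} (hx : x ∈ ⋀[K]^2 V) (h : x * x = 0) : IsDecomposable x := by
  by_cases h0 : ∀ φ : Module.Dual K V, contractLeft φ x = 0
  · exact ⟨0, 0, by rw [eq_zero_of_forall_contractLeft_eq_zero hx h0, map_zero, zero_mul]⟩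
  · obtain ⟨φ, hφ⟩ := not_forall.mp h0
    obtain ⟨v, hv⟩ := exists_contractLeft_eq_ι φ hx
    have hv0 : v ≠ 0 := by
      rintro rfl
      exact hφ (by rw [hv, map_zero])
    have h2 : (2 : K) • (ι K v * x) = 0 := by
      rw [two_smul, ← hv]
      nth_rw 2 [← (commute_of_mem_exteriorPower_two hx (contractLeft φ x)).eq]
      rw [← contractLeft_mul_of_mem_exteriorPower_two φ hx, h, map_zero]
    exact isDecomposable_of_ι_mul_eq_zero hv0 hx
      ((smul_eq_zero.mp h2).resolve_left two_ne_zero)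

theorem exists_ne_zero_contractLeft_eq_zero_of_odd_finrank [NeZero (2 : K)]
    (hodd : Odd (Module.finrank K V)) {x : ExteriorAlgebra K V} (hx : x ∈ ⋀[K]^2 V) :
    ∃ φ : Module.Dual K V, φ ≠ 0 ∧ contractLeft φ x = 0 := by
  let ω : LinearMap.BilinForm K (Module.Dual K V) :=
    (contractLeft.flip ∘ₗ contractLeft.flip x).compr₂ algebraMapInv.toLinearMap
  have hω (φ ψ : Module.Dual K V) :
      ω φ ψ = algebraMapInv (contractLeft ψ (contractLeft φ x)) := rfl
  have halt : ω.IsAlt := fun φ => by rw [hω, contractLeft_contractLeft, map_zero]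
  obtain ⟨φ, hφ0, hφ⟩ := exists_ne_zero_apply_eq_zero_of_isAlt_of_odd_finrank halt
    (by rwa [Subspace.dual_finrank_eq])
  obtain ⟨u, hu⟩ := exists_contractLeft_eq_ι φ hx
  have hu0 : u = 0 := by
    refine (Module.forall_dual_apply_eq_zero_iff K u).mp fun ψ => ?_
    have h : ω φ ψ = ψ u := by rw [hω, hu, contractLeft_ι, algebraMap_leftInverse]
    rw [← h, hφ, LinearMap.zero_apply]
  exact ⟨φ, hφ0, by rw [hu, hu0, map_zero]⟩

theorem exists_smul_eq_of_contractLeft_eq_zero {n : ℕ} (hV : Module.finrank K V = n + 1)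
    {φ : Module.Dual K V} (hφ : φ ≠ 0) {y z : ExteriorAlgebra K V} (hy : y ∈ ⋀[K]^n V)
    (hz : z ∈ ⋀[K]^n V) (hφy : contractLeft φ y = 0) (hφz : contractLeft φ z = 0) (hy0 : y ≠ 0) :
    ∃ a : K, z = a • y := by
  have : FiniteDimensional K V := Module.finite_of_finrank_pos (by omega)
  obtain ⟨e, he⟩ := LinearMap.surjective hφ 1
  -- On the kernel of contraction with `φ`, wedging with `e` is injective, with values in a line.
  have hcontract {t : ExteriorAlgebra K V} (ht : contractLeft φ t = 0) :
      contractLeft φ (ι K e * t) = t := by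
    rw [contractLeft_ι_mul, he, ht, one_smul, mul_zero, sub_zero]
  have hmem {t : ExteriorAlgebra K V} (ht : t ∈ ⋀[K]^n V) : ι K e * t ∈ ⋀[K]^(n + 1) V := by
    rw [exteriorPower, pow_succ']
    exact Submodule.mul_mem_mul ⟨e, rfl⟩ ht
  have htop : Module.finrank K (⋀[K]^(n + 1) V) = 1 := by
    rw [exteriorPower.finrank_eq, hV, Nat.choose_self]
  have hne : (⟨ι K e * y, hmem hy⟩ : ⋀[K]^(n + 1) V) ≠ 0 := fun h =>
    hy0 (by rw [← hcontract hφy, (Submodule.mk_eq_zero _ _).mp h, map_zero])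
  obtain ⟨a, ha⟩ := (finrank_eq_one_iff_of_nonzero' _ hne).mp htop ⟨ι K e * z, hmem hz⟩
  have haz : a • (ι K e * y) = ι K e * z := congrArg Subtype.val ha
  exact ⟨a, by rw [← hcontract hφz, ← haz, map_smul, hcontract hφy]⟩

theorem exists_mul_self_eq_smul_mul_self_of_mul_eq_zero [NeZero (2 : K)]
    (hV : Module.finrank K V = 5) {c d : ExteriorAlgebra K V} (hc : c ∈ ⋀[K]^2 V)
    (hd : d ∈ ⋀[K]^2 V) (hdec : ¬IsDecomposable c) (hcd : c * d = 0) :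
    ∃ a : K, d * d = a • (c * c) := by
  have : FiniteDimensional K V := Module.finite_of_finrank_pos (by omega)
  obtain ⟨φ, hφ0, hφc⟩ := exists_ne_zero_contractLeft_eq_zero_of_odd_finrank
    (hV ▸ ⟨2, rfl⟩ : Odd (Module.finrank K V)) hc
  obtain ⟨v, hv⟩ := exists_contractLeft_eq_ι φ hd
  have hvc : ι K v * c = 0 := by
    rw [← hv, ← (commute_of_mem_exteriorPower_two hc _).eq]
    simpa [contractLeft_mul_of_mem_exteriorPower_two φ hc, hφc] using
      congrArg (contractLeft φ) hcd
  have hv0 : v = 0 := by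
    by_contra hv0
    exact hdec (isDecomposable_of_ι_mul_eq_zero hv0 hc hvc)
  have hφd : contractLeft φ d = 0 := by rw [hv, hv0, map_zero]
  have hsq_mem {x : ExteriorAlgebra K V} (hx : x ∈ ⋀[K]^2 V) : x * x ∈ ⋀[K]^4 V := by
    rw [exteriorPower, pow_add _ 2 2]
    exact Submodule.mul_mem_mul hx hx
  have hφ_sq {x : ExteriorAlgebra K V} (hx : x ∈ ⋀[K]^2 V) (hφx : contractLeft φ x = 0) :
      contractLeft φ (x * x) = 0 := by
    rw [contractLeft_mul_of_mem_exteriorPower_two φ hx, hφx, zero_mul, mul_zero, add_zero]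
  exact exists_smul_eq_of_contractLeft_eq_zero hV hφ0 (hsq_mem hc) (hsq_mem hd) (hφ_sq hc hφc)
    (hφ_sq hd hφd) fun h => hdec (isDecomposable_of_mul_self_eq_zero hc h)

theorem eq_zero_or_eq_zero_of_mul_eq_zero_of_forall_isDecomposable [NeZero (2 : K)]
    (hK : ∀ a : K, IsSquare a) (hV : Module.finrank K V = 5)
    {W : Submodule K (ExteriorAlgebra K V)} (hW : W ≤ ⋀[K]^2 V)
    (hdec : ∀ x ∈ W, IsDecomposable x → x = 0) {c d : ExteriorAlgebra K V} (hc : c ∈ W)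
    (hd : d ∈ W) (hcd : c * d = 0) : c = 0 ∨ d = 0 := by
  have : FiniteDimensional K V := Module.finite_of_finrank_pos (by omega)
  have hsq {x : ExteriorAlgebra K V} (hx : x ∈ W) (h : x * x = 0) : x = 0 :=
    hdec x hx (isDecomposable_of_mul_self_eq_zero (hW hx) h)
  refine or_iff_not_imp_left.mpr fun hc0 => ?_
  obtain ⟨a, ha⟩ := exists_mul_self_eq_smul_mul_self_of_mul_eq_zero hV (hW hc)
    (hW hd) (fun h => hc0 (hdec c hc h)) hcd
  obtain ⟨t, ht⟩ := hK (-a)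
  have hdc : d * c = 0 := by rw [(commute_of_mem_exteriorPower_two (hW hd) c).eq, hcd]
  have hsum : d + t • c = 0 := by
    refine hsq (W.add_mem hd (W.smul_mem t hc)) ?_
    calc (d + t • c) * (d + t • c) = d * d + (t * t) • (c * c) := by
          simp [mul_add, add_mul, hcd, hdc, smul_smul]
      _ = 0 := by rw [ha, ← ht, neg_smul, add_neg_cancel]
  refine hsq hd ?_
  calc d * d = d * (d + t • c) := by rw [mul_add, mul_smul_comm, hdc, smul_zero, add_zero]
    _ = 0 := by rw [hsum, mul_zero]

end Field

theorem stmt8_general {K V : Type*} [Field K] [NeZero (2 : K)] [AddCommGroup V] [Module K V]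
    (hK : ∀ a : K, IsSquare a) (hV : Module.finrank K V = 5)
    {W : Submodule K (ExteriorAlgebra K V)} (hW : W ≤ ⋀[K]^2 V) (hdim : Module.finrank K W ≤ 2)
    (hdec : ∀ x ∈ W, IsDecomposable x → x = 0) {B : W →ₗ[K] W →ₗ[K] K}
    (hB : ∀ α β, B α β = B β α) :
    ∃ φ : ExteriorAlgebra K V →ₗ[K] K, ∀ α β : W,
      B α β = φ ((α : ExteriorAlgebra K V) * (β : ExteriorAlgebra K V)) := by
  have : FiniteDimensional K V := Module.finite_of_finrank_pos (by omega)
  have : FiniteDimensional K W := Submodule.finiteDimensional_of_le hW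
  let F : W →ₗ[K] W →ₗ[K] ExteriorAlgebra K V :=
    (LinearMap.mul K (ExteriorAlgebra K V)).domRestrict₁₂ W W
  have hF_symm (α β : W) : F α β = F β α :=
    (commute_of_mem_exteriorPower_two (hW α.2) (β : ExteriorAlgebra K V)).eq
  have hF_ne (α β : W) (h : F α β = 0) : α = 0 ∨ β = 0 := by
    simpa using
      eq_zero_or_eq_zero_of_mul_eq_zero_of_forall_isDecomposable hK hV hW hdec α.2 β.2 h
  exact exists_dual_comp_eq_of_finrank_le_two hK hdim hF_symm hF_ne hB

/-- Let `V₀` be 5-dimensional over `ℂ` and `W ⊆ ⋀²V₀` a 2-dimensional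
subspace containing no nonzero decomposable element. Then every symmetric bilinear
form on `W` is of the form `(α,β) ↦ φ(α∧β)` for some linear functional `φ` (on `⋀⁴V₀`,
here given as a functional on the exterior algebra); i.e. the natural map
`(⋀⁴V₀)^∨ → Sym²(W^∨)` is surjective. -/
theorem stmt8 (V₀ : Type*) [AddCommGroup V₀] [Module ℂ V₀] [FiniteDimensional ℂ V₀]
    (hV₀ : Module.finrank ℂ V₀ = 5)
    (W : Submodule ℂ (ExteriorAlgebra ℂ V₀)) (hW : W ≤ ⋀[ℂ]^2 V₀)
    (hdim : Module.finrank ℂ W = 2)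
    (hdec : ∀ x ∈ W, (∃ u u' : V₀, x = ι ℂ u * ι ℂ u') → x = 0) :
    ∀ B : ↥W →ₗ[ℂ] ↥W →ₗ[ℂ] ℂ, (∀ α β, B α β = B β α) →
      ∃ φ : ExteriorAlgebra ℂ V₀ →ₗ[ℂ] ℂ, ∀ α β : ↥W,
        B α β = φ ((α : ExteriorAlgebra ℂ V₀) * (β : ExteriorAlgebra ℂ V₀)) :=
  fun _ hB => stmt8_general IsAlgClosed.exists_eq_mul_self hV₀ hW hdim.le hdec hB
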